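/- Let X be a compact metric space with diam(X) < π/2 and p > 1. If μ ∈ P_p(Susp(X)) is supported on the equator X × {π/2}, then the map s ↦ (L_s)_#μ, where L_s([x,t]) = [x,st], is the unique constant-speed geodesic in P_p(Susp(X)) from δ_𝟎 to μ. -/

import Mathlib

open MeasureTheory

/-- An abstract presentation of the spherical suspension of a metric space `X`. -/
structure SuspensionOf (X : Type*) [MetricSpace X] (S : Type*) [MetricSpace S] where
  pt : X → ℝ → S
  surj : ∀ z : S, ∃ x : X, ∃ t ∈ Set.Icc (0 : ℝ) Real.pi, pt x t = z
  dist_eq : ∀ (x y : X) (t s : ℝ), t ∈ Set.Icc (0 : ℝ) Real.pi →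
    s ∈ Set.Icc (0 : ℝ) Real.pi →
    dist (pt x t) (pt y s) =
      Real.arccos (Real.cos t * Real.cos s +
        Real.sin t * Real.sin s * Real.cos (dist x y))

/-- The `p`-Wasserstein distance associated to a cost (distance) function `d`. -/
noncomputable def Wp {Z : Type*} [MeasurableSpace Z] (d : Z → Z → ℝ) (p : ℝ)
    (μ ν : Measure Z) : ℝ :=
  sInf {c : ℝ | ∃ γ : Measure (Z × Z), IsProbabilityMeasure γ ∧
    γ.map Prod.fst = μ ∧ γ.map Prod.snd = ν ∧
    c = (∫ z, d z.1 z.2 ^ p ∂γ) ^ (1 / p)}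

/-!
Every curve `s ↦ [x, s r]` is a geodesic from the vertex, which makes the pushforwards a geodesic.
For uniqueness, let `ν` be the value of another geodesic at time `t`. The only coupling of `δ_𝟎`
with `ν` is the product, so `ν` has radial `p`-th moment `(t r) ^ p`; an optimal coupling of `ν`
with `μ` has cost `((1 - t) r) ^ p`. By the triangle inequality the sum of the two distances is at
least `r`, which the strict form of Jensen's inequality for `u ↦ u ^ p` only allows if both
distances are almost everywhere constant. So the coupling is carried by pairs `(z, [x, r])` with
`d(𝟎, z) = t r` and `d(z, [x, r]) = (1 - t) r`, and in the suspension this means `z = [x, t r]`.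
-/

section Jensen

variable {Ω : Type*} [MeasurableSpace Ω] {P : Measure Ω} [IsProbabilityMeasure P] {p : ℝ}
  {f g : Ω → ℝ}

lemma integral_le_of_integral_rpow_eq (hp : 1 ≤ p) (hf₀ : 0 ≤ᵐ[P] f) (hf : Integrable f P)
    (hfp : Integrable (fun ω => f ω ^ p) P) {c : ℝ} (hc : 0 ≤ c)
    (h : ∫ ω, f ω ^ p ∂P = c ^ p) : ∫ ω, f ω ∂P ≤ c := by
  have jensen : (∫ ω, f ω ∂P) ^ p ≤ ∫ ω, f ω ^ p ∂P :=
    (convexOn_rpow hp).map_integral_le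
      (Real.continuous_rpow_const (by linarith)).continuousOn isClosed_Ici hf₀ hf hfp
  exact (Real.rpow_le_rpow_iff (integral_nonneg_of_ae hf₀) hc (by linarith)).1 (jensen.trans_eq h)

lemma ae_eq_integral_of_integral_rpow_eq (hp : 1 < p) (hf₀ : 0 ≤ᵐ[P] f) (hf : Integrable f P)
    (hfp : Integrable (fun ω => f ω ^ p) P)
    (h : ∫ ω, f ω ^ p ∂P = (∫ ω, f ω ∂P) ^ p) : ∀ᵐ ω ∂P, f ω = ∫ ω, f ω ∂P := by
  have jensen := (strictConvexOn_rpow hp).ae_eq_const_or_map_average_lt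
    (Real.continuous_rpow_const (by linarith)).continuousOn isClosed_Ici hf₀ hf hfp
  simp only [average_eq_integral] at jensen
  exact jensen.resolve_right h.not_gt

lemma ae_eq_and_ae_eq_of_add_le (hp : 1 < p)
    (hf₀ : 0 ≤ᵐ[P] f) (hf : Integrable f P) (hfp : Integrable (fun ω => f ω ^ p) P)
    (hg₀ : 0 ≤ᵐ[P] g) (hg : Integrable g P) (hgp : Integrable (fun ω => g ω ^ p) P)
    {a b : ℝ} (ha : 0 ≤ a) (hb : 0 ≤ b) (hfa : ∫ ω, f ω ^ p ∂P = a ^ p)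
    (hgb : ∫ ω, g ω ^ p ∂P = b ^ p) (hadd : ∀ᵐ ω ∂P, a + b ≤ f ω + g ω) :
    (∀ᵐ ω ∂P, f ω = a) ∧ ∀ᵐ ω ∂P, g ω = b := by
  have hf_le : ∫ ω, f ω ∂P ≤ a := integral_le_of_integral_rpow_eq hp.le hf₀ hf hfp ha hfa
  have hg_le : ∫ ω, g ω ∂P ≤ b := integral_le_of_integral_rpow_eq hp.le hg₀ hg hgp hb hgb
  have add_le : a + b ≤ ∫ ω, f ω ∂P + ∫ ω, g ω ∂P := by
    simpa [integral_add hf hg] using integral_mono_ae (integrable_const (a + b)) (hf.add hg) hadd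
  obtain rfl : ∫ ω, f ω ∂P = a := by linarith
  obtain rfl : ∫ ω, g ω ∂P = b := by linarith
  exact ⟨ae_eq_integral_of_integral_rpow_eq hp hf₀ hf hfp hfa,
    ae_eq_integral_of_integral_rpow_eq hp hg₀ hg hgp hgb⟩

end Jensen

lemma exists_measurable_comp_eq_of_factorsThrough {X Y Z : Type*}
    [TopologicalSpace X] [CompactSpace X]
    [TopologicalSpace Y] [T2Space Y] [MeasurableSpace Y] [OpensMeasurableSpace Y]
    [TopologicalSpace Z] [MeasurableSpace Z] [BorelSpace Z] [Nonempty Z]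
    {f : X → Y} {g : X → Z} (hf : Continuous f) (hg : Continuous g) (h : g.FactorsThrough f) :
    ∃ L : Y → Z, Measurable L ∧ L ∘ f = g := by
  let q : C(X, Set.range f) := ⟨Set.rangeFactorization f, hf.rangeFactorization⟩
  have hq : Topology.IsQuotientMap q :=
    .of_surjective_continuous Set.rangeFactorization_surjective q.continuous
  have hfactors : (⟨g, hg⟩ : C(X, Z)).toFun.FactorsThrough q :=
    fun _ _ hxy => h (congrArg Subtype.val hxy)
  let L₀ : C(Set.range f, Z) := hq.lift ⟨g, hg⟩ hfactors
  obtain ⟨L, hL, hL₀⟩ :=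
    (MeasurableEmbedding.subtype_coe (isCompact_range hf).measurableSet).exists_measurable_extend
      L₀.continuous.measurable fun _ => inferInstance
  refine ⟨L, hL, funext fun x => ?_⟩
  calc L (f x) = L₀ (q x) := congrFun hL₀ (q x)
    _ = g x := DFunLike.congr_fun (hq.lift_comp ⟨g, hg⟩ hfactors) x

/-- `γ` is a coupling (transport plan) of `μ` and `ν`, that is, one of the competitors in the
infimum defining `Wp`. -/
structure IsCoupling {Z : Type*} [MeasurableSpace Z] (μ ν : Measure Z) (γ : Measure (Z × Z)) :
    Prop where
  isProbabilityMeasure : IsProbabilityMeasure γ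
  map_fst : γ.map Prod.fst = μ
  map_snd : γ.map Prod.snd = ν

namespace IsCoupling

variable {Z : Type*} [MeasurableSpace Z] {μ ν : Measure Z} {γ : Measure (Z × Z)}

lemma prod (μ ν : Measure Z) [IsProbabilityMeasure μ] [IsProbabilityMeasure ν] :
    IsCoupling μ ν (μ.prod ν) where
  isProbabilityMeasure := inferInstance
  map_fst := by simp
  map_snd := by simp

lemma map_prodMk {X : Type*} [MeasurableSpace X] (μ₀ : Measure X) [IsProbabilityMeasure μ₀]
    {f g : X → Z} (hf : Measurable f) (hg : Measurable g) :
    IsCoupling (μ₀.map f) (μ₀.map g) (μ₀.map fun x => (f x, g x)) where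
  isProbabilityMeasure := Measure.isProbabilityMeasure_map (hf.prodMk hg).aemeasurable
  map_fst := Measure.map_map measurable_fst (hf.prodMk hg)
  map_snd := Measure.map_map measurable_snd (hf.prodMk hg)

lemma ae_fst (hγ : IsCoupling μ ν γ) {q : Z → Prop} (h : ∀ᵐ z ∂μ, q z) : ∀ᵐ z ∂γ, q z.1 :=
  ae_of_ae_map measurable_fst.aemeasurable (hγ.map_fst ▸ h)

lemma ae_snd (hγ : IsCoupling μ ν γ) {q : Z → Prop} (h : ∀ᵐ z ∂ν, q z) : ∀ᵐ z ∂γ, q z.2 :=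
  ae_of_ae_map measurable_snd.aemeasurable (hγ.map_snd ▸ h)

end IsCoupling

section OptimalCoupling

variable {S : Type*} [MetricSpace S] [MeasurableSpace S] {p : ℝ} {μ ν : Measure S}
  {γ : Measure (S × S)}

/-- The cost of the transport plan `γ` for `dist ^ p`, whose `p`-th root is minimized in `Wp`. -/
noncomputable def transportCost (p : ℝ) (γ : Measure (S × S)) : ℝ :=
  ∫ z, dist z.1 z.2 ^ p ∂γ

/-- `γ` is a coupling of `μ` and `ν` at which the infimum defining the `p`-Wasserstein distance is
attained. -/
structure IsOptimalCoupling (p : ℝ) (μ ν : Measure S) (γ : Measure (S × S)) : Prop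
    extends IsCoupling μ ν γ where
  transportCost_le : ∀ γ', IsCoupling μ ν γ' → transportCost p γ ≤ transportCost p γ'

lemma transportCost_nonneg (p : ℝ) (γ : Measure (S × S)) : 0 ≤ transportCost p γ :=
  integral_nonneg fun _ => Real.rpow_nonneg dist_nonneg p

lemma transportCost_eq_of_ae_dist_eq [IsProbabilityMeasure γ] {c : ℝ}
    (h : ∀ᵐ z ∂γ, dist z.1 z.2 = c) : transportCost p γ = c ^ p := by
  calc transportCost p γ = ∫ _, c ^ p ∂γ := integral_congr_ae (h.mono fun z hz => by simp only [hz])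
    _ = c ^ p := by simp

lemma IsOptimalCoupling.Wp_eq (hγ : IsOptimalCoupling p μ ν γ) (hp : 0 ≤ p) :
    Wp dist p μ ν = transportCost p γ ^ (1 / p) := by
  refine IsLeast.csInf_eq ⟨⟨γ, hγ.isProbabilityMeasure, hγ.map_fst, hγ.map_snd, rfl⟩, ?_⟩
  rintro c ⟨γ', hγ', hfst, hsnd, rfl⟩
  exact Real.rpow_le_rpow (transportCost_nonneg p γ) (hγ.transportCost_le γ' ⟨hγ', hfst, hsnd⟩)
    (by positivity)

lemma IsOptimalCoupling.transportCost_eq (hγ : IsOptimalCoupling p μ ν γ) (hp : 0 < p) :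
    transportCost p γ = Wp dist p μ ν ^ p := by
  rw [hγ.Wp_eq hp.le, one_div, Real.rpow_inv_rpow (transportCost_nonneg p γ) hp.ne']

lemma IsOptimalCoupling.Wp_eq_of_ae_dist_eq (hγ : IsOptimalCoupling p μ ν γ) (hp : 0 < p) {c : ℝ}
    (hc : 0 ≤ c) (h : ∀ᵐ z ∂γ, dist z.1 z.2 = c) : Wp dist p μ ν = c := by
  have := hγ.isProbabilityMeasure
  rw [hγ.Wp_eq hp.le, transportCost_eq_of_ae_dist_eq h, one_div, Real.rpow_rpow_inv hc hp.ne']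

end OptimalCoupling

section Wasserstein

variable {S : Type*} [MetricSpace S] [MeasurableSpace S] [BorelSpace S]
  {p : ℝ} {μ ν : Measure S} {v : S}

lemma IsCoupling.transportCost_dirac {γ : Measure (S × S)}
    (hγ : IsCoupling (Measure.dirac v) ν γ) (hp : 0 ≤ p) :
    transportCost p γ = ∫ z, dist v z ^ p ∂ν := by
  have hfst : ∀ᵐ z ∂γ, z.1 = v :=
    hγ.ae_fst ((ae_dirac_iff (measurableSet_singleton v)).2 rfl)
  have hcont : Continuous fun z => dist v z ^ p :=
    (continuous_const.dist continuous_id).rpow_const fun _ => Or.inr hp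
  rw [← hγ.map_snd, integral_map measurable_snd.aemeasurable hcont.aestronglyMeasurable]
  exact integral_congr_ae (hfst.mono fun z hz => by simp only [hz])

lemma isOptimalCoupling_dirac_prod (v : S) (ν : Measure S) [IsProbabilityMeasure ν] (hp : 0 ≤ p) :
    IsOptimalCoupling p (Measure.dirac v) ν ((Measure.dirac v).prod ν) :=
  ⟨.prod _ _, fun _ hγ =>
    ((IsCoupling.prod _ _).transportCost_dirac hp).trans_le (hγ.transportCost_dirac hp).ge⟩

lemma integral_dist_rpow_eq_Wp_dirac_rpow [IsProbabilityMeasure ν] (hp : 0 < p) :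
    ∫ z, dist v z ^ p ∂ν = Wp dist p (Measure.dirac v) ν ^ p := by
  have hopt := isOptimalCoupling_dirac_prod v ν hp.le
  rw [← hopt.transportCost_eq hp, hopt.transportCost_dirac hp.le]

lemma Wp_dirac_eq_of_ae_dist_eq [IsProbabilityMeasure ν] (hp : 0 < p) {r : ℝ} (hr : 0 ≤ r)
    (h : ∀ᵐ z ∂ν, dist v z = r) : Wp dist p (Measure.dirac v) ν = r := by
  have hopt := isOptimalCoupling_dirac_prod v ν hp.le
  refine hopt.Wp_eq_of_ae_dist_eq hp hr ?_
  filter_upwards [hopt.ae_fst ((ae_dirac_iff (measurableSet_singleton v)).2 rfl), hopt.ae_snd h]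
    with z hz₁ hz₂
  rw [hz₁, hz₂]

lemma ae_dist_map_eq {X : Type*} [MeasurableSpace X] {μ₀ : Measure X} {f : X → S} {r : ℝ}
    (hf : Measurable f) (h : ∀ x, dist v (f x) = r) : ∀ᵐ z ∂μ₀.map f, dist v z = r :=
  (ae_map_iff hf.aemeasurable
    (isClosed_eq (continuous_const.dist continuous_id) continuous_const).measurableSet).2
    (.of_forall h)

variable [CompactSpace S]

lemma continuous_transportCost (hp : 0 ≤ p) :
    Continuous fun γ : ProbabilityMeasure (S × S) => transportCost p (γ : Measure (S × S)) :=
  ProbabilityMeasure.continuous_integral_boundedContinuousFunction <|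
    BoundedContinuousFunction.mkOfCompact ⟨fun z : S × S => dist z.1 z.2 ^ p,
      continuous_dist.rpow_const fun _ => Or.inr hp⟩

lemma exists_isOptimalCoupling (hp : 0 ≤ p) (μ ν : Measure S) [IsProbabilityMeasure μ]
    [IsProbabilityMeasure ν] : ∃ γ, IsOptimalCoupling p μ ν γ := by
  let μ' : ProbabilityMeasure S := ⟨μ, inferInstance⟩
  let ν' : ProbabilityMeasure S := ⟨ν, inferInstance⟩
  let couplings : Set (ProbabilityMeasure (S × S)) :=
    {γ | γ.map measurable_fst.aemeasurable = μ' ∧ γ.map measurable_snd.aemeasurable = ν'}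
  have mem_couplings {γ : Measure (S × S)} (hγ : IsCoupling μ ν γ) :
      ⟨γ, hγ.isProbabilityMeasure⟩ ∈ couplings :=
    ⟨Subtype.ext hγ.map_fst, Subtype.ext hγ.map_snd⟩
  have hcompact : IsCompact couplings :=
    ((isClosed_eq (ProbabilityMeasure.continuous_map continuous_fst) continuous_const).inter
      (isClosed_eq (ProbabilityMeasure.continuous_map continuous_snd)
        continuous_const)).isCompact
  obtain ⟨γ, hγ, hmin⟩ := hcompact.exists_isMinOn ⟨_, mem_couplings (.prod μ ν)⟩
    (continuous_transportCost hp).continuousOn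
  exact ⟨γ, ⟨inferInstance, congrArg Subtype.val hγ.1, congrArg Subtype.val hγ.2⟩,
    fun γ' hγ' => hmin (mem_couplings hγ')⟩

lemma IsCoupling.isOptimalCoupling_of_ae_dist_eq {γ : Measure (S × S)} (hγ : IsCoupling μ ν γ)
    (hp : 0 ≤ p) {r r' : ℝ} (hμ : ∀ᵐ z ∂μ, dist v z = r) (hν : ∀ᵐ z ∂ν, dist v z = r')
    (h : ∀ᵐ z ∂γ, dist z.1 z.2 = |r - r'|) : IsOptimalCoupling p μ ν γ := by
  refine ⟨hγ, fun γ' hγ' => ?_⟩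
  have := hγ.isProbabilityMeasure
  have := hγ'.isProbabilityMeasure
  have hcont : Continuous fun z : S × S => dist z.1 z.2 ^ p :=
    continuous_dist.rpow_const fun _ => Or.inr hp
  have le_dist : ∀ᵐ z ∂γ', |r - r'| ≤ dist z.1 z.2 := by
    filter_upwards [hγ'.ae_fst hμ, hγ'.ae_snd hν] with z hz₁ hz₂
    simpa only [dist_comm _ v, hz₁, hz₂] using abs_dist_sub_le z.1 z.2 v
  calc transportCost p γ = |r - r'| ^ p := transportCost_eq_of_ae_dist_eq h
    _ = ∫ _, |r - r'| ^ p ∂γ' := by simp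
    _ ≤ transportCost p γ' := integral_mono_ae (integrable_const _)
      (hcont.integrable_of_hasCompactSupport (.of_compactSpace _))
      (le_dist.mono fun z hz => Real.rpow_le_rpow (abs_nonneg _) hz hp)

lemma Wp_map_map_eq_abs_sub {X : Type*} [MeasurableSpace X] {μ₀ : Measure X}
    [IsProbabilityMeasure μ₀] {f g : X → S} (hf : Measurable f) (hg : Measurable g) (hp : 0 < p)
    {r r' : ℝ} (hvf : ∀ x, dist v (f x) = r) (hvg : ∀ x, dist v (g x) = r')
    (hfg : ∀ x, dist (f x) (g x) = |r - r'|) :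
    Wp dist p (μ₀.map f) (μ₀.map g) = |r - r'| := by
  have hdist : ∀ᵐ z ∂μ₀.map fun x => (f x, g x), dist z.1 z.2 = |r - r'| :=
    (ae_map_iff (hf.prodMk hg).aemeasurable
      (isClosed_eq continuous_dist continuous_const).measurableSet).2 (.of_forall hfg)
  have hopt := (IsCoupling.map_prodMk μ₀ hf hg).isOptimalCoupling_of_ae_dist_eq hp.le
    (ae_dist_map_eq hf hvf) (ae_dist_map_eq hg hvg) hdist
  exact hopt.Wp_eq_of_ae_dist_eq hp (abs_nonneg _) hdist

lemma IsOptimalCoupling.ae_dist_eq_and_dist_eq {γ : Measure (S × S)}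
    (hγ : IsOptimalCoupling p ν μ γ) (hp : 1 < p) {a b : ℝ} (ha : 0 ≤ a) (hb : 0 ≤ b)
    (hνa : ∫ z, dist v z ^ p ∂ν = a ^ p) (hνμ : Wp dist p ν μ = b)
    (hμ : ∀ᵐ z ∂μ, dist v z = a + b) : ∀ᵐ z ∂γ, dist v z.1 = a ∧ dist z.1 z.2 = b := by
  have hp₀ : 0 < p := by linarith
  have := hγ.isProbabilityMeasure
  have integrable {f : S × S → ℝ} (hf : Continuous f) : Integrable f γ :=
    hf.integrable_of_hasCompactSupport (.of_compactSpace f)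
  have hrpow {f : S × S → ℝ} (hf : Continuous f) : Continuous fun z => f z ^ p :=
    hf.rpow_const fun _ => Or.inr hp₀.le
  have hradial : Continuous fun z : S × S => dist v z.1 := continuous_const.dist continuous_fst
  have hmoment : ∫ z, dist v z.1 ^ p ∂γ = a ^ p := by
    have hcont : Continuous fun z => dist v z ^ p :=
      (continuous_const.dist continuous_id).rpow_const fun _ => Or.inr hp₀.le
    rw [← hνa, ← hγ.map_fst,
      integral_map measurable_fst.aemeasurable hcont.aestronglyMeasurable]
  have hcost : ∫ z, dist z.1 z.2 ^ p ∂γ = b ^ p := hνμ ▸ hγ.transportCost_eq hp₀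
  have htriangle : ∀ᵐ z ∂γ, a + b ≤ dist v z.1 + dist z.1 z.2 :=
    (hγ.ae_snd hμ).mono fun z hz => hz.symm.trans_le (dist_triangle v z.1 z.2)
  exact Filter.eventually_and.2 <| ae_eq_and_ae_eq_of_add_le hp
    (.of_forall fun _ => dist_nonneg) (integrable hradial) (integrable (hrpow hradial))
    (.of_forall fun _ => dist_nonneg) (integrable continuous_dist)
    (integrable (hrpow continuous_dist)) ha hb hmoment hcost htriangle

lemma eq_map_of_unique_between {X : Type*} [TopologicalSpace X] [CompactSpace X]
    [MeasurableSpace X] [OpensMeasurableSpace X] {μ₀ : Measure X} [IsProbabilityMeasure μ₀]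
    [IsProbabilityMeasure ν] {f g : X → S} (hf : Continuous f) (hg : Continuous g) (hp : 1 < p)
    {a b : ℝ} (ha : 0 ≤ a) (hb : 0 ≤ b) (hνa : Wp dist p (Measure.dirac v) ν = a)
    (hνb : Wp dist p ν (μ₀.map f) = b) (hfv : ∀ x, dist v (f x) = a + b)
    (hbetween : ∀ x z, dist v z = a ∧ dist z (f x) = b ↔ z = g x) : ν = μ₀.map g := by
  have : IsProbabilityMeasure (μ₀.map f) :=
    Measure.isProbabilityMeasure_map hf.measurable.aemeasurable
  have hfactors : g.FactorsThrough f := fun x y hxy =>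
    (hbetween y (g x)).1 (hxy ▸ (hbetween x (g x)).2 rfl)
  have : Nonempty S := ⟨v⟩
  obtain ⟨L, hL, rfl⟩ := exists_measurable_comp_eq_of_factorsThrough hf hg hfactors
  obtain ⟨γ, hγ⟩ := exists_isOptimalCoupling (by linarith : 0 ≤ p) ν (μ₀.map f)
  have hrange : ∀ᵐ z ∂γ, z.2 ∈ Set.range f :=
    hγ.ae_snd (ae_map_mem_range f (isCompact_range hf).measurableSet μ₀)
  have hdist : ∀ᵐ z ∂γ, dist v z.1 = a ∧ dist z.1 z.2 = b :=
    hγ.ae_dist_eq_and_dist_eq hp ha hb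
      (hνa ▸ integral_dist_rpow_eq_Wp_dirac_rpow (by linarith)) hνb
      (ae_dist_map_eq hf.measurable hfv)
  have hgraph : ∀ᵐ z ∂γ, z.1 = L z.2 := by
    filter_upwards [hrange, hdist] with z ⟨x, hx⟩ hz
    rw [← hx] at hz ⊢
    exact (hbetween x z.1).1 hz
  calc ν = γ.map Prod.fst := hγ.map_fst.symm
    _ = γ.map (L ∘ Prod.snd) := Measure.map_congr hgraph
    _ = (μ₀.map f).map L := by rw [← hγ.map_snd, Measure.map_map hL measurable_snd]
    _ = μ₀.map (L ∘ f) := Measure.map_map hL hf.measurable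

end Wasserstein

section Geodesic

variable {S : Type*} [MetricSpace S] [MeasurableSpace S] {p : ℝ}

/-- `γ` is a constant-speed geodesic from `μ` to `ν` in the `p`-Wasserstein space over `S`. As it is
parametrized by `[0, 1]`, its values at other times are arbitrary. -/
structure IsWassersteinGeodesic (p : ℝ) (μ ν : Measure S) (γ : ℝ → Measure S) : Prop where
  map_zero : γ 0 = μ
  map_one : γ 1 = ν
  isProbabilityMeasure : ∀ t ∈ Set.Icc (0 : ℝ) 1, IsProbabilityMeasure (γ t)
  Wp_eq : ∀ s t : ℝ, s ∈ Set.Icc (0 : ℝ) 1 → t ∈ Set.Icc (0 : ℝ) 1 →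
    Wp dist p (γ s) (γ t) = |s - t| * Wp dist p μ ν

variable [BorelSpace S] [CompactSpace S] {X : Type*} [MeasurableSpace X] {μ₀ : Measure X}
  [IsProbabilityMeasure μ₀] {v : S} {r : ℝ}

lemma isWassersteinGeodesic_map {g : ℝ → X → S}
    (hg : ∀ s ∈ Set.Icc (0 : ℝ) 1, Measurable (g s)) (hp : 0 < p) (hr : 0 ≤ r)
    (hg₀ : ∀ x, g 0 x = v)
    (hdist : ∀ x, ∀ s ∈ Set.Icc (0 : ℝ) 1, ∀ t ∈ Set.Icc (0 : ℝ) 1,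
      dist (g s x) (g t x) = |s - t| * r) :
    IsWassersteinGeodesic p (Measure.dirac v) (μ₀.map (g 1)) fun s => μ₀.map (g s) := by
  have hprob (s : ℝ) (hs : s ∈ Set.Icc (0 : ℝ) 1) : IsProbabilityMeasure (μ₀.map (g s)) :=
    Measure.isProbabilityMeasure_map (hg s hs).aemeasurable
  have hradial (s : ℝ) (hs : s ∈ Set.Icc (0 : ℝ) 1) (x : X) : dist v (g s x) = s * r := by
    rw [← hg₀ x, hdist x 0 (by simp) s hs, zero_sub, abs_neg, abs_of_nonneg hs.1]
  have hlength : Wp dist p (Measure.dirac v) (μ₀.map (g 1)) = r := by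
    have := hprob 1 (by simp)
    exact Wp_dirac_eq_of_ae_dist_eq hp hr
      (ae_dist_map_eq (hg 1 (by simp)) fun x => by rw [hradial 1 (by simp), one_mul])
  refine ⟨by simp [funext hg₀], rfl, hprob, fun s t hs ht => ?_⟩
  have habs : |s - t| * r = |s * r - t * r| := by rw [← sub_mul, abs_mul, abs_of_nonneg hr]
  rw [hlength, habs]
  exact Wp_map_map_eq_abs_sub (hg s hs) (hg t ht) hp (hradial s hs) (hradial t ht)
    fun x => habs ▸ hdist x s hs t ht

lemma IsWassersteinGeodesic.eq_map [TopologicalSpace X] [CompactSpace X] [OpensMeasurableSpace X]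
    {f g : X → S} {γ : ℝ → Measure S} {t : ℝ}
    (hγ : IsWassersteinGeodesic p (Measure.dirac v) (μ₀.map f) γ)
    (hf : Continuous f) (hg : Continuous g) (hp : 1 < p) (ht : t ∈ Set.Icc (0 : ℝ) 1)
    (hr : 0 ≤ r) (hfr : ∀ x, dist v (f x) = r)
    (hbetween : ∀ x z, dist v z = t * r ∧ dist z (f x) = (1 - t) * r ↔ z = g x) :
    γ t = μ₀.map g := by
  have := hγ.isProbabilityMeasure t ht
  have : IsProbabilityMeasure (μ₀.map f) :=
    Measure.isProbabilityMeasure_map hf.measurable.aemeasurable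
  have ht₁ : 0 ≤ 1 - t := sub_nonneg.2 ht.2
  have hlength : Wp dist p (Measure.dirac v) (μ₀.map f) = r :=
    Wp_dirac_eq_of_ae_dist_eq (by linarith) hr (ae_dist_map_eq hf.measurable hfr)
  have hleft : Wp dist p (Measure.dirac v) (γ t) = t * r := by
    rw [← hγ.map_zero, hγ.Wp_eq 0 t (by simp) ht, hlength, zero_sub, abs_neg, abs_of_nonneg ht.1]
  have hright : Wp dist p (γ t) (μ₀.map f) = (1 - t) * r := by
    rw [← hγ.map_one, hγ.Wp_eq t 1 ht (by simp), hlength, abs_sub_comm, abs_of_nonneg ht₁]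
  exact eq_map_of_unique_between hf hg hp (mul_nonneg ht.1 hr) (mul_nonneg ht₁ hr) hleft hright
    (fun x => by rw [hfr]; ring) hbetween

end Geodesic

namespace SuspensionOf

open Real

variable {X S : Type*} [MetricSpace X] [MetricSpace S] (susp : SuspensionOf X S)

lemma cos_dist_pt (x y : X) {t s : ℝ} (ht : t ∈ Set.Icc 0 π) (hs : s ∈ Set.Icc 0 π) :
    cos (dist (susp.pt x t) (susp.pt y s)) =
      cos t * cos s + sin t * sin s * cos (dist x y) := by
  have hsin : 0 ≤ sin t * sin s :=
    mul_nonneg (sin_nonneg_of_mem_Icc ht) (sin_nonneg_of_mem_Icc hs)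
  rw [susp.dist_eq x y t s ht hs]
  apply cos_arccos
  · nlinarith [neg_one_le_cos (t + s), cos_add t s, neg_one_le_cos (dist x y)]
  · nlinarith [cos_le_one (t - s), cos_sub t s, cos_le_one (dist x y)]

lemma dist_pt_pt_self (x : X) {t s : ℝ} (ht : t ∈ Set.Icc 0 π) (hs : s ∈ Set.Icc 0 π) :
    dist (susp.pt x t) (susp.pt x s) = |t - s| := by
  rw [susp.dist_eq x x t s ht hs, dist_self, cos_zero, mul_one, ← cos_sub, ← cos_abs]
  have hle : |t - s| ≤ π :=
    abs_sub_le_iff.2 ⟨by linarith [ht.2, hs.1], by linarith [ht.1, hs.2]⟩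
  exact arccos_cos (abs_nonneg _) hle

lemma dist_pt_zero (x y : X) {t : ℝ} (ht : t ∈ Set.Icc 0 π) :
    dist (susp.pt x 0) (susp.pt y t) = t := by
  rw [susp.dist_eq x y 0 t ⟨le_rfl, pi_pos.le⟩ ht]
  simp [arccos_cos ht.1 ht.2]

lemma pt_zero_eq (x y : X) : susp.pt x 0 = susp.pt y 0 :=
  dist_eq_zero.1 (susp.dist_pt_zero x y ⟨le_rfl, pi_pos.le⟩)

lemma continuousOn_pt :
    ContinuousOn (fun q : X × ℝ => susp.pt q.1 q.2) (Set.univ ×ˢ Set.Icc 0 π) := by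
  rintro ⟨y, s⟩ ⟨-, hs⟩
  rw [ContinuousWithinAt, tendsto_iff_dist_tendsto_zero]
  have hcont : Continuous fun q : X × ℝ =>
      arccos (cos q.2 * cos s + sin q.2 * sin s * cos (dist q.1 y)) :=
    continuous_arccos.comp (by fun_prop)
  have hlim := (hcont.tendsto (y, s)).mono_left
    (nhdsWithin_le_nhds (s := Set.univ ×ˢ Set.Icc 0 π))
  rw [← susp.dist_eq y y s s hs hs, dist_self] at hlim
  refine hlim.congr' ?_
  filter_upwards [self_mem_nhdsWithin] with q hq
  exact (susp.dist_eq q.1 y q.2 s hq.2 hs).symm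

lemma continuous_pt {t : ℝ} (ht : t ∈ Set.Icc 0 π) : Continuous fun x => susp.pt x t :=
  susp.continuousOn_pt.comp_continuous (f := fun x => (x, t)) (by fun_prop)
    fun _ => ⟨Set.mem_univ _, ht⟩

lemma compactSpace [CompactSpace X] (susp : SuspensionOf X S) : CompactSpace S := by
  have himage : (fun q : X × ℝ => susp.pt q.1 q.2) '' (Set.univ ×ˢ Set.Icc 0 π) = Set.univ := by
    refine Set.eq_univ_of_forall fun z => ?_
    obtain ⟨x, t, ht, rfl⟩ := susp.surj z
    exact ⟨(x, t), ⟨Set.mem_univ x, ht⟩, rfl⟩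
  exact ⟨himage ▸ (isCompact_univ.prod isCompact_Icc).image_of_continuousOn susp.continuousOn_pt⟩

lemma pt_eq_pt_of_sin_mul_cos_dist_eq {x y : X} {t : ℝ} (ht : t ∈ Set.Icc 0 π)
    (h : sin t * cos (dist x y) = sin t) : susp.pt x t = susp.pt y t := by
  rw [← dist_eq_zero, susp.dist_eq x y t t ht ht, arccos_eq_zero, mul_assoc, h]
  linarith [sin_sq_add_cos_sq t]

lemma dist_eq_and_dist_eq_iff_eq_pt (x₀ x : X) (z : S) {t r : ℝ} (ht : t ∈ Set.Icc 0 r)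
    (hr : r < π) :
    dist (susp.pt x₀ 0) z = t ∧ dist z (susp.pt x r) = r - t ↔ z = susp.pt x t := by
  have ht' : t ∈ Set.Icc 0 π := ⟨ht.1, ht.2.trans hr.le⟩
  have hr' : r ∈ Set.Icc 0 π := ⟨ht.1.trans ht.2, hr.le⟩
  constructor
  · rintro ⟨hvz, hzx⟩
    obtain ⟨y, u, hu, rfl⟩ := susp.surj z
    obtain rfl : u = t := (susp.dist_pt_zero x₀ y hu).symm.trans hvz
    apply susp.pt_eq_pt_of_sin_mul_cos_dist_eq hu
    have hcos : sin r * (sin u * cos (dist y x)) = sin r * sin u := by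
      have := susp.cos_dist_pt y x hu hr'
      rw [hzx, cos_sub] at this
      linarith
    rcases hr'.1.eq_or_lt with rfl | hr₀
    · simp [le_antisymm ht.2 ht.1]
    · exact mul_left_cancel₀ (sin_pos_of_pos_of_lt_pi hr₀ hr).ne' hcos
  · rintro rfl
    exact ⟨susp.dist_pt_zero x₀ x ht', by
      rw [susp.dist_pt_pt_self x ht' hr', abs_sub_comm, abs_of_nonneg (sub_nonneg.2 ht.2)]⟩

lemma isWassersteinGeodesic_map_pt [CompactSpace X] [MeasurableSpace X] [OpensMeasurableSpace X]
    [MeasurableSpace S] [BorelSpace S] (x₀ : X) (μ₀ : Measure X) [IsProbabilityMeasure μ₀]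
    {p r : ℝ} (hp : 0 < p) (hr : r ∈ Set.Icc 0 π) :
    IsWassersteinGeodesic p (Measure.dirac (susp.pt x₀ 0)) (μ₀.map fun x => susp.pt x r)
      fun s => μ₀.map fun x => susp.pt x (s * r) := by
  have := susp.compactSpace
  have hmem {s : ℝ} (hs : s ∈ Set.Icc (0 : ℝ) 1) : s * r ∈ Set.Icc 0 π :=
    ⟨mul_nonneg hs.1 hr.1, (mul_le_of_le_one_left hr.1 hs.2).trans hr.2⟩
  have hgeod := isWassersteinGeodesic_map (μ₀ := μ₀) (g := fun s x => susp.pt x (s * r))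
    (v := susp.pt x₀ 0) (fun s hs => (susp.continuous_pt (hmem hs)).measurable) hp hr.1
    (fun x => by rw [zero_mul, susp.pt_zero_eq x x₀])
    (fun x s hs t ht => by
      rw [susp.dist_pt_pt_self x (hmem hs) (hmem ht), ← sub_mul, abs_mul, abs_of_nonneg hr.1])
  simpa only [one_mul] using hgeod

end SuspensionOf

theorem stmt_15_general {X S : Type*} [MetricSpace X] [CompactSpace X] [MeasurableSpace X]
    [OpensMeasurableSpace X] [MetricSpace S] [MeasurableSpace S] [BorelSpace S]
    (susp : SuspensionOf X S) (x₀ : X) (μ₀ : Measure X) [IsProbabilityMeasure μ₀] {p r : ℝ}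
    (hp : 1 < p) (hr : r ∈ Set.Ico 0 Real.pi) :
    IsWassersteinGeodesic p (Measure.dirac (susp.pt x₀ 0)) (μ₀.map fun x => susp.pt x r)
        (fun s => μ₀.map fun x => susp.pt x (s * r)) ∧
      ∀ γ : ℝ → Measure S,
        IsWassersteinGeodesic p (Measure.dirac (susp.pt x₀ 0)) (μ₀.map fun x => susp.pt x r) γ →
        ∀ t ∈ Set.Icc (0 : ℝ) 1, γ t = μ₀.map fun x => susp.pt x (t * r) := by
  have := susp.compactSpace
  have hr' : r ∈ Set.Icc 0 Real.pi := ⟨hr.1, hr.2.le⟩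
  refine ⟨susp.isWassersteinGeodesic_map_pt x₀ μ₀ (by linarith) hr', fun γ hγ t ht => ?_⟩
  have htr : t * r ∈ Set.Icc 0 r := ⟨mul_nonneg ht.1 hr.1, mul_le_of_le_one_left hr.1 ht.2⟩
  refine hγ.eq_map (susp.continuous_pt hr')
    (susp.continuous_pt ⟨htr.1, htr.2.trans hr'.2⟩) hp ht hr.1
    (fun x => susp.dist_pt_zero x₀ x hr') fun x z => ?_
  rw [one_sub_mul]
  exact susp.dist_eq_and_dist_eq_iff_eq_pt x₀ x z htr hr.2

/-- If `μ ∈ P_p(Susp(X))` is supported on the equator `X × {π/2}` (i.e. `μ` is the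
pushforward of a probability measure `μ₀` on `X` under `x ↦ [x,π/2]`), then
`s ↦ (L_s)_#μ`, where `L_s([x,t]) = [x,st]`, is the unique constant-speed geodesic
from `δ_𝟎` to `μ` in `P_p(Susp(X))`. -/
theorem stmt_15 {X S : Type*} [MetricSpace X] [CompactSpace X] [Nonempty X]
    [MeasurableSpace X] [BorelSpace X]
    [MetricSpace S] [MeasurableSpace S] [BorelSpace S]
    (hdiam : ∀ a b : X, dist a b < Real.pi / 2)
    (p : ℝ) (hp : 1 < p) (susp : SuspensionOf X S)
    (μ₀ : Measure X) [IsProbabilityMeasure μ₀] :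
    ∀ v0 : S, v0 = susp.pt (Classical.arbitrary X) 0 →
    ∀ μ : Measure S, μ = μ₀.map (fun x : X => susp.pt x (Real.pi / 2)) →
    ∀ G : ℝ → Measure S,
      G = (fun s : ℝ => μ₀.map (fun x : X => susp.pt x (s * (Real.pi / 2)))) →
      -- `G` is a constant-speed geodesic from `δ_𝟎` to `μ`
      ((G 0 = Measure.dirac v0 ∧ G 1 = μ ∧
        (∀ s t : ℝ, s ∈ Set.Icc (0 : ℝ) 1 → t ∈ Set.Icc (0 : ℝ) 1 →
          Wp (fun a b : S => dist a b) p (G s) (G t) =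
            |s - t| * Wp (fun a b : S => dist a b) p (Measure.dirac v0) μ)) ∧
      -- and it is the unique such geodesic
      (∀ γ : ℝ → Measure S, γ 0 = Measure.dirac v0 → γ 1 = μ →
        (∀ t ∈ Set.Icc (0 : ℝ) 1, IsProbabilityMeasure (γ t)) →
        (∀ s t : ℝ, s ∈ Set.Icc (0 : ℝ) 1 → t ∈ Set.Icc (0 : ℝ) 1 →
          Wp (fun a b : S => dist a b) p (γ s) (γ t) =
            |s - t| * Wp (fun a b : S => dist a b) p (Measure.dirac v0) μ) →
        ∀ t ∈ Set.Icc (0 : ℝ) 1, γ t = G t)) := by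
  rintro _ rfl _ rfl _ rfl
  have hequator : Real.pi / 2 ∈ Set.Ico 0 Real.pi :=
    ⟨Real.pi_div_two_pos.le, half_lt_self Real.pi_pos⟩
  obtain ⟨hgeod, huniq⟩ := stmt_15_general susp (Classical.arbitrary X) μ₀ hp hequator
  exact ⟨⟨hgeod.map_zero, hgeod.map_one, hgeod.Wp_eq⟩,
    fun γ h₀ h₁ hprob hWp => huniq γ ⟨h₀, h₁, hprob, hWp⟩⟩
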